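/- arXiv:2205.00109 — 2 statements merged into one kernel-verified Lean document; each statement's English description precedes it below -/
import Mathlib

section
/- Suppose t ≥ 1, k > t, n ≥ 2k, and F ⊆ binom([n],k) is a nonempty saturated t-intersecting family. Let B be the family of minimal (under inclusion) members of T_t(F), and let B^{(t+1)} be the family of (t+1)-element members of B. If τ_t(B^{(t+1)}) ≥ t + 1, then there exists a (t+2)-element set T ⊆ [n] such that F = {A ∈ binom([n],k) : |A ∩ T| ≥ t+1}. -/
open Finset

def ground (n : ℕ) : Finset ℕ := Finset.Icc 1 n

def ksets (n k : ℕ) : Finset (Finset ℕ) := (ground n).powersetCard k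

def starF (n k : ℕ) (T : Finset ℕ) : Finset (Finset ℕ) :=
  (ksets n k).filter fun S => T ⊆ S

def meet (A B : Finset (Finset ℕ)) : Finset (Finset ℕ) :=
  (A ×ˢ B).image fun p => p.1 ∩ p.2

def dInt (A B : Finset (Finset ℕ)) : Finset (Finset ℕ) :=
  ((A ×ˢ B).filter fun p => p.1 ≠ p.2).image fun p => p.1 ∩ p.2

def crossInt (A B : Finset (Finset ℕ)) : Prop :=
  ∀ F ∈ A, ∀ G ∈ B, (F ∩ G).Nonempty

open Classical in
noncomputable def nu (A : Finset (Finset ℕ)) : ℕ :=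
  (A.powerset.filter fun M : Finset (Finset ℕ) =>
    (↑M : Set (Finset ℕ)).PairwiseDisjoint id).sup Finset.card

def transv (n k : ℕ) (H : Finset (Finset ℕ)) : Finset (Finset ℕ) :=
  (ground n).powerset.filter fun T => T.card ≤ k ∧ ∀ h ∈ H, (T ∩ h).Nonempty

def basis (n k : ℕ) (H : Finset (Finset ℕ)) : Finset (Finset ℕ) :=
  (transv n k H).filter fun b => ∀ b' ∈ transv n k H, b' ⊆ b → b' = b

def tIntersecting (t : ℕ) (A : Finset (Finset ℕ)) : Prop :=
  ∀ F ∈ A, ∀ F' ∈ A, t ≤ (F ∩ F').card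

def ttransv (n k t : ℕ) (H : Finset (Finset ℕ)) : Finset (Finset ℕ) :=
  (ground n).powerset.filter fun T => T.card ≤ k ∧ ∀ h ∈ H, t ≤ (T ∩ h).card

def tbasis (n k t : ℕ) (H : Finset (Finset ℕ)) : Finset (Finset ℕ) :=
  (ttransv n k t H).filter fun b => ∀ b' ∈ ttransv n k t H, b' ⊆ b → b' = b

def crossSperner (A B : Finset (Finset ℕ)) : Prop :=
  ∀ a ∈ A, ∀ b ∈ B, ¬ a ⊆ b ∧ ¬ b ⊆ a

def A1 (n k : ℕ) : Finset (Finset ℕ) :=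
  starF n k {1, 2} ∪ starF n k {3, 4} ∪ starF n k {1, 4, 5} ∪ starF n k {2, 3, 6}

def A2 (n k : ℕ) : Finset (Finset ℕ) :=
  starF n k {1, 3} ∪ starF n k {2, 4} ∪ starF n k {1, 4, 6} ∪ starF n k {2, 3, 5}

def Ankt (n k t : ℕ) : Finset (Finset ℕ) :=
  (ksets n k).filter fun A => t + 1 ≤ (A ∩ ground (t + 2)).card

/-- A `k`-set meeting every member of a saturated `t`-intersecting family in at least `t` points
belongs to the family. -/
lemma mem_of_mem_ttransv {n k t : ℕ} (hk : t ≤ k) {F : Finset (Finset ℕ)} (hF : F ⊆ ksets n k)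
    (hint : tIntersecting t F)
    (hsat : ∀ F' : Finset (Finset ℕ), F ⊆ F' → F' ⊆ ksets n k → tIntersecting t F' → F' = F)
    {A : Finset ℕ} (hA : A ∈ ksets n k) (hAF : ∀ h ∈ F, t ≤ (A ∩ h).card) : A ∈ F := by
  rw [← hsat (insert A F) (subset_insert _ _) (insert_subset hA hF) ?_]
  · exact mem_insert_self _ _
  · intro X hX Y hY
    rw [mem_insert] at hX hY
    rcases hX with rfl | hX <;> rcases hY with rfl | hY
    · rw [inter_self, (mem_powersetCard.1 hA).2]
      exact hk
    · exact hAF Y hY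
    · rw [inter_comm]
      exact hAF X hX
    · exact hint X hX Y hY

/-- If `2 * k ≤ n`, the `t`-transversals of a saturated `t`-intersecting family pairwise meet in at
least `t` points. -/
lemma tIntersecting_ttransv {n k t : ℕ} (hk : t ≤ k) (hn : 2 * k ≤ n) {F : Finset (Finset ℕ)}
    (hF : F ⊆ ksets n k) (hint : tIntersecting t F)
    (hsat : ∀ F' : Finset (Finset ℕ), F ⊆ F' → F' ⊆ ksets n k → tIntersecting t F' → F' = F) :
    tIntersecting t (ttransv n k t F) := by
  intro b hb c hc
  simp only [ttransv, mem_filter, mem_powerset] at hb hc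
  obtain ⟨hbn, hbk, hbF⟩ := hb
  obtain ⟨hcn, hck, hcF⟩ := hc
  have hsub : b ⊆ ground n \ (c \ b) := by
    intro x hx
    simp [hx, hbn hx]
  have hcard : k ≤ (ground n \ (c \ b)).card := by
    have h₁ := le_card_sdiff (c \ b) (ground n)
    have h₂ := card_le_card (sdiff_subset : c \ b ⊆ c)
    have h₃ : (ground n).card = n := by simp [ground]
    omega
  obtain ⟨A, hbA, hAs, hAk⟩ := exists_subsuperset_card_eq hsub hbk hcard
  have hAF : A ∈ F := mem_of_mem_ttransv hk hF hint hsat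
    (mem_powersetCard.2 ⟨hAs.trans sdiff_subset, hAk⟩)
    fun h hh => (hbF h hh).trans (card_le_card (inter_subset_inter_right hbA))
  refine (hcF A hAF).trans (card_le_card ?_)
  intro x hx
  have := @hAs x
  simp only [mem_inter, mem_sdiff] at *
  tauto

theorem stmt16 (n k t : ℕ) (ht : 1 ≤ t) (hk : t < k) (hn : 2 * k ≤ n)
    (F : Finset (Finset ℕ)) (hF : F ⊆ ksets n k) (hFne : F.Nonempty)
    (hint : tIntersecting t F)
    (hsat : ∀ F' : Finset (Finset ℕ), F ⊆ F' → F' ⊆ ksets n k →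
      tIntersecting t F' → F' = F)
    (htau : ∀ T : Finset ℕ, T ⊆ ground n →
      (∀ b ∈ (tbasis n k t F).filter fun b => b.card = t + 1, t ≤ (T ∩ b).card) →
        t + 1 ≤ T.card) :
    ∃ T : Finset ℕ, T ⊆ ground n ∧ T.card = t + 2 ∧
      F = (ksets n k).filter fun A => t + 1 ≤ (A ∩ T).card := by
  have hpair : ∀ b ∈ ttransv n k t F, ∀ c ∈ ttransv n k t F, t ≤ (b ∩ c).card :=
    tIntersecting_ttransv hk.le hn hF hint hsat
  have hex : ∀ T ⊆ ground n, T.card ≤ t →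
      ∃ b ∈ ttransv n k t F, b.card = t + 1 ∧ (T ∩ b).card < t := by
    intro T hT hTt
    by_contra! hcon
    have := htau T hT fun b hb => by
      obtain ⟨hb, hbt⟩ := mem_filter.1 hb
      exact hcon b (mem_filter.1 hb).1 hbt
    omega
  have hground : ∀ b ∈ ttransv n k t F, b ⊆ ground n := fun b hb =>
    mem_powerset.1 (mem_filter.1 hb).1
  obtain ⟨a, ha, hat, -⟩ := hex ∅ (empty_subset _) (by simp)
  obtain ⟨S, hSa, hSt⟩ := exists_subset_card_eq (show t ≤ a.card by omega)
  obtain ⟨b, hb, hbt, hSb⟩ := hex S (hSa.trans (hground a ha)) hSt.le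
  have hab : (a ∩ b).card = t := by
    refine le_antisymm ?_ (hpair a ha b hb)
    by_contra! hlt
    have hIa : a ∩ b = a := eq_of_subset_of_card_le inter_subset_left (by omega)
    have hSI : S ∩ b = S := inter_eq_left.2 (hSa.trans (inter_eq_left.1 hIa))
    rw [hSI] at hSb
    omega
  obtain ⟨c, hc, hct, hIc⟩ := hex (a ∩ b) (inter_subset_left.trans (hground a ha)) hab.le
  have hTcard : (a ∪ b).card = t + 2 := by
    have := card_union_add_card_inter a b
    omega
  have hcT : c ⊆ a ∪ b := by
    have h₁ := card_union_add_card_inter (a ∩ c) (b ∩ c)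
    rw [← union_inter_distrib_right, ← inter_inter_distrib_right] at h₁
    have h₂ := hpair a ha c hc
    have h₃ := hpair b hb c hc
    exact inter_eq_right.1 (eq_of_subset_of_card_le inter_subset_right (by omega))
  refine ⟨a ∪ b, union_subset (hground a ha) (hground b hb), hTcard, Eq.symm ?_⟩
  refine hsat _ ?_ (filter_subset _ _) ?_
  · intro A hA
    refine mem_filter.2 ⟨hF hA, ?_⟩
    by_contra! hlt
    have hmeet : ∀ d ∈ ttransv n k t F, d ⊆ a ∪ b → A ∩ (a ∪ b) ⊆ d := by
      intro d hd hdT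
      have h₁ := (mem_filter.1 hd).2.2 A hA
      rw [inter_comm] at h₁
      have h₂ : A ∩ d = A ∩ (a ∪ b) :=
        eq_of_subset_of_card_le (inter_subset_inter_left hdT) (by omega)
      exact h₂ ▸ inter_subset_right
    have h₁ : A ∩ (a ∪ b) ⊆ a ∩ b ∩ c :=
      subset_inter (subset_inter (hmeet a ha subset_union_left) (hmeet b hb subset_union_right))
        (hmeet c hc hcT)
    have h₂ := card_le_card h₁
    have h₃ := (mem_filter.1 ha).2.2 A hA
    have h₄ : (a ∩ A).card ≤ (A ∩ (a ∪ b)).card := by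
      rw [inter_comm]
      exact card_le_card (inter_subset_inter_left subset_union_left)
    omega
  · intro X hX Y hY
    have h₁ := (mem_filter.1 hX).2
    have h₂ := (mem_filter.1 hY).2
    have h₃ := card_union_add_card_inter (X ∩ (a ∪ b)) (Y ∩ (a ∪ b))
    rw [← union_inter_distrib_right, ← inter_inter_distrib_right] at h₃
    have h₄ := card_le_card (inter_subset_right : (X ∪ Y) ∩ (a ∪ b) ⊆ a ∪ b)
    have h₅ := card_le_card (inter_subset_left : X ∩ Y ∩ (a ∪ b) ⊆ X ∩ Y)
    omega
end

section
/- Let n = 2d with d ≥ 1. Then: (a) for every pair of cross-Sperner families A, B ⊆ 2^{[n]}, |I(A, B)| ≤ 2^n − 2·2^d + 1; and (b) there exist cross-Sperner families A, B ⊆ 2^{[n]} with |I(A, B)| = 2^n − 2·2^d + 1. In other words, m(n) = 2^n − 2·2^{n/2} + 1 for even n. -/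
open Finset

theorem crossSperner.symm {A B : Finset (Finset ℕ)} (h : crossSperner A B) : crossSperner B A :=
  fun b hb a ha => (h a ha b hb).symm

theorem meet_comm (A B : Finset (Finset ℕ)) : meet A B = meet B A := by
  ext c
  simp only [meet, mem_image, mem_product, Prod.exists]
  constructor <;> rintro ⟨a, b, ⟨ha, hb⟩, rfl⟩ <;> exact ⟨b, a, ⟨hb, ha⟩, inter_comm _ _⟩

theorem card_meet_le_mul (A B : Finset (Finset ℕ)) : (meet A B).card ≤ A.card * B.card :=
  card_image_le.trans_eq (card_product A B)

theorem crossSperner.disjoint {A B : Finset (Finset ℕ)} (h : crossSperner A B) : Disjoint A B :=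
  disjoint_left.2 fun a ha hb => (h a ha a hb).1 Subset.rfl

theorem crossSperner.disjoint_meet_left {A B : Finset (Finset ℕ)} (h : crossSperner A B) :
    Disjoint (meet A B) A := by
  refine disjoint_left.2 fun c hc hcA => ?_
  simp only [meet, mem_image, mem_product, Prod.exists] at hc
  obtain ⟨a, b, ⟨-, hb⟩, rfl⟩ := hc
  exact (h _ hcA b hb).1 inter_subset_right

/-- No member of a cross-Sperner pair contains the whole ground set. -/
theorem crossSperner.notMem_left {A B : Finset (Finset ℕ)} (h : crossSperner A B)
    {S : Finset ℕ} (hB : B ⊆ S.powerset) (hne : B.Nonempty) : S ∉ A := by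
  obtain ⟨b, hb⟩ := hne
  exact fun hS => (h S hS b hb).2 (mem_powerset.1 (hB hb))

/-- The families `A`, `B`, their meets and the top set are pairwise disjoint. -/
theorem crossSperner.card_meet_add_le {A B : Finset (Finset ℕ)} (h : crossSperner A B)
    {S : Finset ℕ} (hA : A ⊆ S.powerset) (hB : B ⊆ S.powerset)
    (hAne : A.Nonempty) (hBne : B.Nonempty) :
    (meet A B).card + A.card + B.card + 1 ≤ 2 ^ S.card := by
  have hM : meet A B ⊆ S.powerset := by
    intro c hc
    simp only [meet, mem_image, mem_product, Prod.exists] at hc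
    obtain ⟨a, b, ⟨ha, -⟩, rfl⟩ := hc
    exact mem_powerset.2 (inter_subset_left.trans (mem_powerset.1 (hA ha)))
  have hSM : S ∉ meet A B := by
    intro hS
    simp only [meet, mem_image, mem_product, Prod.exists] at hS
    obtain ⟨a, b, ⟨ha, hb⟩, hab⟩ := hS
    have haS : a ⊆ a ∩ b := hab ▸ mem_powerset.1 (hA ha)
    exact (h a ha b hb).1 (haS.trans inter_subset_right)
  have hMB : Disjoint (meet A B) B := meet_comm B A ▸ h.symm.disjoint_meet_left
  have hSU : S ∉ meet A B ∪ A ∪ B := by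
    simp only [mem_union, not_or]
    exact ⟨⟨hSM, h.notMem_left hB hBne⟩, h.symm.notMem_left hA hAne⟩
  rw [← card_union_of_disjoint h.disjoint_meet_left,
    ← card_union_of_disjoint (disjoint_union_left.2 ⟨hMB, h.disjoint⟩),
    ← card_insert_of_notMem hSU, ← card_powerset]
  exact card_le_card (insert_subset (mem_powerset_self S)
    (union_subset (union_subset hM hA) hB))

theorem le_sub_one_sq_of_le_mul_of_add_le {m a b k : ℕ} (hk : 1 ≤ k) (hmul : m ≤ a * b)
    (hadd : m + a + b + 1 ≤ k ^ 2) : m ≤ (k - 1) ^ 2 := by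
  obtain ⟨t, rfl⟩ := Nat.exists_eq_add_of_le' hk
  rw [Nat.add_sub_cancel]
  by_cases hab : a + b ≤ 2 * t
  · zify at *
    nlinarith [sq_nonneg ((a : ℤ) - b)]
  · nlinarith

theorem crossSperner.card_meet_le {A B : Finset (Finset ℕ)} (h : crossSperner A B)
    {S : Finset ℕ} {d : ℕ} (hS : S.card = 2 * d) (hA : A ⊆ S.powerset) (hB : B ⊆ S.powerset) :
    (meet A B).card ≤ (2 ^ d - 1) ^ 2 := by
  rcases A.eq_empty_or_nonempty with rfl | hAne
  · simp [meet]
  rcases B.eq_empty_or_nonempty with rfl | hBne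
  · simp [meet]
  refine le_sub_one_sq_of_le_mul_of_add_le Nat.one_le_two_pow (card_meet_le_mul A B) ?_
  rw [← pow_mul, mul_comm d 2, ← hS]
  exact h.card_meet_add_le hA hB hAne hBne

/-- The subsets of `X ∪ Y` that contain `X` but not `Y`. -/
def aboveNotAbove (X Y : Finset ℕ) : Finset (Finset ℕ) :=
  (X ∪ Y).powerset.filter fun S => X ⊆ S ∧ ¬ Y ⊆ S

theorem crossSperner_aboveNotAbove (X Y : Finset ℕ) :
    crossSperner (aboveNotAbove X Y) (aboveNotAbove Y X) := by
  intro a ha b hb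
  simp only [aboveNotAbove, mem_filter] at ha hb
  exact ⟨fun h => hb.2.2 (ha.2.1.trans h), fun h => ha.2.2 (hb.2.1.trans h)⟩

theorem mul_le_card_meet_aboveNotAbove {X Y : Finset ℕ} (hXY : Disjoint X Y) :
    (2 ^ X.card - 1) * (2 ^ Y.card - 1) ≤
      (meet (aboveNotAbove X Y) (aboveNotAbove Y X)).card := by
  have hcard (Z : Finset ℕ) : Z.ssubsets.card = 2 ^ Z.card - 1 := by
    rw [ssubsets, card_erase_of_mem (mem_powerset_self Z), card_powerset]
  rw [← hcard, ← hcard, ← card_product]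
  rw [disjoint_left] at hXY
  refine card_le_card_of_injOn (fun p => p.1 ∪ p.2) ?_ ?_
  · rintro ⟨P, Q⟩ hp
    simp only [coe_product, Set.mem_prod, mem_coe, mem_ssubsets, ssubset_iff_subset_not_subset]
      at hp
    obtain ⟨⟨hP, hP'⟩, hQ, hQ'⟩ := hp
    simp only [meet, mem_coe, mem_image, mem_product, Prod.exists, aboveNotAbove, mem_filter,
      mem_powerset]
    refine ⟨X ∪ Q, P ∪ Y, ⟨⟨?_, ?_, ?_⟩, ?_, ?_, ?_⟩, ?_⟩
    all_goals grind
  · rintro ⟨P, Q⟩ hp ⟨P', Q'⟩ hp' heq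
    simp only [coe_product, Set.mem_prod, mem_coe, mem_ssubsets, ssubset_iff_subset_not_subset]
      at hp hp' heq
    simp only [Finset.ext_iff, mem_union] at heq
    have hP : P = P' := by ext x; grind
    have hQ : Q = Q' := by ext x; grind
    rw [hP, hQ]

theorem two_pow_sub_add_one_eq_sq {d : ℕ} (hd : 1 ≤ d) :
    2 ^ (2 * d) - 2 * 2 ^ d + 1 = (2 ^ d - 1) ^ 2 := by
  obtain ⟨t, ht⟩ := Nat.exists_eq_add_of_le' (Nat.le_self_pow (by lia : d ≠ 0) 2)
  rw [mul_comm 2 d, pow_mul, ht, show t + 2 - 1 = t + 1 by lia]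
  have : (t + 2) ^ 2 = 2 * (t + 2) + t * (t + 2) := by ring
  rw [this, Nat.add_sub_cancel_left]
  ring

theorem stmt19 (d : ℕ) (hd : 1 ≤ d) :
    (∀ A B : Finset (Finset ℕ), A ⊆ (ground (2 * d)).powerset →
      B ⊆ (ground (2 * d)).powerset → crossSperner A B →
      (meet A B).card ≤ 2 ^ (2 * d) - 2 * 2 ^ d + 1) ∧
    (∃ A B : Finset (Finset ℕ), A ⊆ (ground (2 * d)).powerset ∧
      B ⊆ (ground (2 * d)).powerset ∧ crossSperner A B ∧
      (meet A B).card = 2 ^ (2 * d) - 2 * 2 ^ d + 1) := by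
  rw [two_pow_sub_add_one_eq_sq hd]
  have hcard : (ground (2 * d)).card = 2 * d := by simp [ground]
  refine ⟨fun A B hA hB h => h.card_meet_le hcard hA hB, ?_⟩
  have hXY : Icc 1 d ∪ Icc (d + 1) (2 * d) = ground (2 * d) := by
    ext x
    simp only [ground, mem_union, mem_Icc]
    lia
  have hdisj : Disjoint (Icc 1 d) (Icc (d + 1) (2 * d)) := by
    rw [disjoint_left]
    intro x
    simp only [mem_Icc]
    lia
  have hA : aboveNotAbove (Icc 1 d) (Icc (d + 1) (2 * d)) ⊆ (ground (2 * d)).powerset :=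
    hXY ▸ filter_subset _ _
  have hB : aboveNotAbove (Icc (d + 1) (2 * d)) (Icc 1 d) ⊆ (ground (2 * d)).powerset :=
    hXY ▸ union_comm (Icc 1 d) _ ▸ filter_subset _ _
  have hcs := crossSperner_aboveNotAbove (Icc 1 d) (Icc (d + 1) (2 * d))
  refine ⟨_, _, hA, hB, hcs, (hcs.card_meet_le hcard hA hB).antisymm ?_⟩
  have hle := mul_le_card_meet_aboveNotAbove hdisj
  rwa [Nat.card_Icc, Nat.card_Icc, show d + 1 - 1 = d by lia,
    show 2 * d + 1 - (d + 1) = d by lia, ← sq] at hle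
end
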